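/- Let W be a Coxeter group in which every edge label m(s,t) for distinct generators s,t is either a power of 2 or ∞. Then every element of W of finite order has order a power of 2. -/

import Mathlib

/-!
Strategy.  Consider groups generated by involutions with relations `(b c)^(2^(j+1)) = 1`.
If `G` is the subgroup generated by a finite set `T` of generators and `s` is a further generator,
the subgroup generated by `T ∪ {s}` embeds in `K ⋊ G`, where `K` is again a group of this kind but
with smaller exponents.  Induct on the exponents and on `T`; with no relation at all
the group embeds in `FreeGroup ⋊ ℤˣ`.
-/

namespace EvenCox

/-- The group has no nontrivial element of odd order. -/
def NoOdd (G : Type*) [Group G] : Prop := ∀ (w : G) (n : ℕ), Odd n → w ^ n = 1 → w = 1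

theorem NoOdd.semidirect {N G : Type*} [Group N] [Group G] {φ : G →* MulAut N}
    (hN : NoOdd N) (hG : NoOdd G) : NoOdd (N ⋊[φ] G) := by
  intro w n hn hw
  have h1 : w.right = 1 := by
    refine hG _ n hn ?_
    have := congrArg SemidirectProduct.rightHom hw
    rwa [map_pow, map_one] at this
  have h2 : w = SemidirectProduct.inl w.left := by
    ext
    · simp
    · simp [h1]
  rw [h2, ← map_pow, ← map_one SemidirectProduct.inl, SemidirectProduct.inl_inj] at hw
  rw [h2, hN _ n hn hw, map_one]

theorem swap_pow {G : Type*} [Group G] {a b : G} {n : ℕ} (h : (a * b) ^ n = 1) :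
    (b * a) ^ n = 1 := by
  have : b * a = a⁻¹ * (a * b) * (a⁻¹)⁻¹ := by group
  rw [this, conj_pow, h]; simp

/-- Defining relations. -/
def rels {B : Type} (R : B → B → ℕ → Prop) : Set (FreeGroup B) :=
  {x | (∃ b, x = FreeGroup.of b ^ 2) ∨
    ∃ b c j, R b c j ∧ x = (FreeGroup.of b * FreeGroup.of c) ^ (2 ^ (j + 1))}

/-- The group presented by involutions and relations `(b c)^(2^(j+1)) = 1` for `R b c j`. -/
abbrev PG {B : Type} (R : B → B → ℕ → Prop) : Type := PresentedGroup (rels R)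

/-- Generators. -/
def gen {B : Type} (R : B → B → ℕ → Prop) (b : B) : PG R := PresentedGroup.of b

section
variable {B : Type} {R : B → B → ℕ → Prop}

theorem gen_sq (b : B) : gen R b ^ 2 = 1 :=
  PresentedGroup.one_of_mem (rels := rels R) (Or.inl ⟨b, rfl⟩)

theorem gen_mul_self (b : B) : gen R b * gen R b = 1 := by rw [← pow_two, gen_sq]

theorem gen_inv (b : B) : (gen R b)⁻¹ = gen R b := inv_eq_of_mul_eq_one_left (gen_mul_self b)

theorem gen_rel {b c : B} {j : ℕ} (h : R b c j) : (gen R b * gen R c) ^ (2 ^ (j + 1)) = 1 :=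
  PresentedGroup.one_of_mem (rels := rels R) (Or.inr ⟨b, c, j, h, rfl⟩)

/-- Universal property. -/
def lift {H : Type*} [Group H] (f : B → H) (h1 : ∀ b, f b ^ 2 = 1)
    (h2 : ∀ b c j, R b c j → (f b * f c) ^ (2 ^ (j + 1)) = 1) : PG R →* H :=
  PresentedGroup.toGroup (f := f) (rels := rels R) (by
    rintro r (⟨b, rfl⟩ | ⟨b, c, j, h, rfl⟩)
    · simpa using h1 b
    · simpa using h2 b c j h)

@[simp] theorem lift_gen {H : Type*} [Group H] (f : B → H) (h1 : ∀ b, f b ^ 2 = 1)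
    (h2 : ∀ b c j, R b c j → (f b * f c) ^ (2 ^ (j + 1)) = 1) (b : B) :
    lift f h1 h2 (gen R b) = f b := PresentedGroup.toGroup.of _

theorem hom_ext {H : Type*} [Group H] {f g : PG R →* H}
    (h : ∀ b, f (gen R b) = g (gen R b)) : f = g := PresentedGroup.ext h

theorem mem_of_gen (H : Subgroup (PG R)) (h : ∀ b, gen R b ∈ H) (x : PG R) : x ∈ H :=
  PresentedGroup.generated_by _ H h x

theorem exists_finset (x : PG R) :
    ∃ T : Finset B, x ∈ Subgroup.closure (Set.image (gen R) (T : Set B)) := by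
  classical
  have : x ∈ Subgroup.closure (Set.range (gen R)) :=
    mem_of_gen _ (fun b => Subgroup.subset_closure (Set.mem_range_self b)) x
  induction this using Subgroup.closure_induction with
  | mem x hx =>
    obtain ⟨b, rfl⟩ := hx
    exact ⟨{b}, Subgroup.subset_closure ⟨b, by simp, rfl⟩⟩
  | one => exact ⟨∅, one_mem _⟩
  | mul x y _ _ hx hy =>
    obtain ⟨T, hT⟩ := hx
    obtain ⟨U, hU⟩ := hy
    refine ⟨T ∪ U, mul_mem (Subgroup.closure_mono ?_ hT) (Subgroup.closure_mono ?_ hU)⟩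
    · exact Set.image_mono (by simp)
    · exact Set.image_mono (by simp)
  | inv x _ hx =>
    obtain ⟨T, hT⟩ := hx
    exact ⟨T, inv_mem hT⟩

end

/-! ### No relations -/

section base
variable (B : Type)

/-- The automorphism of the free group inverting all generators. -/
def flip : FreeGroup B →* FreeGroup B := FreeGroup.lift fun b => (FreeGroup.of b)⁻¹

theorem flip_flip : (flip B).comp (flip B) = MonoidHom.id _ := by
  ext b; simp [flip]

/-- The same as an automorphism. -/
def flipAut : MulAut (FreeGroup B) :=
  MonoidHom.toMulEquiv (flip B) (flip B) (flip_flip B) (flip_flip B)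

theorem flipAut_sq : flipAut B * flipAut B = 1 := by
  ext x
  exact DFunLike.congr_fun (flip_flip B) x

/-- Action of `ℤˣ` on the free group. -/
def act : ℤˣ →* MulAut (FreeGroup B) where
  toFun u := if u = 1 then 1 else flipAut B
  map_one' := by simp
  map_mul' u v := by
    rcases Int.units_eq_one_or u with rfl | rfl <;> rcases Int.units_eq_one_or v with rfl | rfl <;>
      simp [flipAut_sq]

theorem act_neg_one_of (b : B) : act B (-1) (FreeGroup.of b) = (FreeGroup.of b)⁻¹ := by
  have : act B (-1) = flipAut B := by simp [act]
  rw [this]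
  simp [flipAut, flip]

theorem noOdd_base (R : B → B → ℕ → Prop) (hR : ∀ b c j, ¬ R b c j) : NoOdd (PG R) := by
  have hU : NoOdd ℤˣ := by
    intro u n hn hu
    rcases Int.units_eq_one_or u with rfl | rfl
    · rfl
    · rw [hn.neg_one_pow] at hu; exact hu
  have hF : NoOdd (FreeGroup B) := by
    intro w n hn hw
    exact (pow_eq_one_iff_left hn.pos.ne').1 hw
  have hS : NoOdd (FreeGroup B ⋊[act B] ℤˣ) := hF.semidirect hU
  let f : PG R →* FreeGroup B ⋊[act B] ℤˣ :=
    lift (fun b => ⟨FreeGroup.of b, -1⟩) (by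
      intro b
      rw [pow_two]
      ext
      · simp [act_neg_one_of]
      · simp) (fun b c j h => (hR b c j h).elim)
  let g : FreeGroup B ⋊[act B] ℤˣ →* PG R :=
    SemidirectProduct.lift (FreeGroup.lift (gen R)) 1 (by
      intro u
      ext b
      rcases Int.units_eq_one_or u with rfl | rfl
      · simp
      · simp [act_neg_one_of, gen_inv])
  have hgf : g.comp f = MonoidHom.id _ := by
    apply hom_ext
    intro b
    simp [f, g, SemidirectProduct.mk_eq_inl_mul_inr]
  intro w n hn hw
  have : f w = 1 := hS _ n hn (by rw [← map_pow, hw, map_one])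
  have h2 := DFunLike.congr_fun hgf w
  simpa [this] using h2.symm

end base

/-! ### The inductive step -/

section step
variable {B : Type} (R : B → B → ℕ → Prop) (T : Set B) (s : B)

/-- The subgroup generated by `T`. -/
abbrev G : Subgroup (PG R) := Subgroup.closure (Set.image (gen R) T)

/-- Generators of `G`. -/
def tg {t : B} (ht : t ∈ T) : G R T := ⟨gen R t, Subgroup.subset_closure ⟨t, ht, rfl⟩⟩

/-- Symmetrised relation. -/
def Sy (b c : B) (j : ℕ) : Prop := R b c j ∨ R c b j

/-- The subgroup of `G` generated by the generators commuting with `s`. -/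
def C : Subgroup (G R T) :=
  Subgroup.closure {x | ∃ (t : B) (ht : t ∈ T), Sy R s t 0 ∧ x = tg R T ht}

/-- Relations of the kernel. -/
def Rk (x y : G R T ⧸ C R T s) (j : ℕ) : Prop :=
  ∃ (g : G R T) (t : B) (ht : t ∈ T), Sy R s t (j + 1) ∧
    x = QuotientGroup.mk g ∧ y = QuotientGroup.mk (g * tg R T ht)

theorem sy_rel {b c : B} {j : ℕ} (h : Sy R b c j) : (gen R b * gen R c) ^ (2 ^ (j + 1)) = 1 :=
  h.elim gen_rel fun h => swap_pow (gen_rel h)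

/-- The kernel. -/
abbrev K : Type := PG (Rk R T s)

/-- Action of one element of `G` on the kernel. -/
def actHom (g : G R T) : K R T s →* K R T s :=
  lift (fun x => gen _ (g • x)) (fun x => gen_sq _) (by
    rintro x y j ⟨g₀, t, ht, h, rfl, rfl⟩
    exact gen_rel ⟨g * g₀, t, ht, h, rfl, by rw [mul_assoc]; rfl⟩)

theorem actHom_gen (g : G R T) (x) : actHom R T s g (gen _ x) = gen _ (g • x) := lift_gen _ _ _ _

theorem actHom_mul (g h : G R T) :
    (actHom R T s g).comp (actHom R T s h) = actHom R T s (g * h) := by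
  apply hom_ext
  intro x
  simp [actHom_gen, mul_smul]

theorem actHom_one : actHom R T s 1 = MonoidHom.id _ := by
  apply hom_ext
  intro x
  simp [actHom_gen]

/-- Action of `G` on the kernel. -/
def actK : G R T →* MulAut (K R T s) where
  toFun g := MonoidHom.toMulEquiv (actHom R T s g) (actHom R T s g⁻¹)
    (by rw [actHom_mul, inv_mul_cancel, actHom_one])
    (by rw [actHom_mul, mul_inv_cancel, actHom_one])
  map_one' := by
    ext x
    exact DFunLike.congr_fun (actHom_one R T s) x
  map_mul' g h := by
    ext x
    exact (DFunLike.congr_fun (actHom_mul R T s g h) x).symm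

theorem actK_gen (g : G R T) (x) : actK R T s g (gen _ x) = gen _ (g • x) := actHom_gen R T s g x

theorem C_comm (c : G R T) (hc : c ∈ C R T s) :
    (c : PG R) * gen R s * (c : PG R)⁻¹ = gen R s := by
  have hle : C R T s ≤ (Subgroup.centralizer {gen R s}).comap (G R T).subtype := by
    rw [C, Subgroup.closure_le]
    rintro _ ⟨t, ht, h, rfl⟩
    have h1 := sy_rel R h
    rw [SetLike.mem_coe, Subgroup.mem_comap, Subgroup.mem_centralizer_singleton_iff]
    change gen R t * gen R s = gen R s * gen R t
    have h2 : gen R s * gen R t = (gen R s * gen R t)⁻¹ := by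
      rw [eq_inv_iff_mul_eq_one, ← pow_two]; simpa using h1
    rw [h2, mul_inv_rev, gen_inv, gen_inv]
  have := hle hc
  rw [Subgroup.mem_comap, Subgroup.mem_centralizer_singleton_iff] at this
  change (c : PG R) * gen R s = gen R s * c at this
  rw [this, mul_inv_cancel_right]

/-- Conjugates of `s`. -/
def cj : G R T ⧸ C R T s → PG R :=
  Quotient.lift (fun g : G R T => (g : PG R) * gen R s * (g : PG R)⁻¹) (by
    intro a b hab
    have hab : a⁻¹ * b ∈ C R T s := QuotientGroup.leftRel_apply.1 hab
    have h := C_comm R T s _ hab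
    simp only [Subgroup.coe_mul, InvMemClass.coe_inv] at h
    change (a : PG R) * gen R s * (a : PG R)⁻¹ = (b : PG R) * gen R s * (b : PG R)⁻¹
    calc (a : PG R) * gen R s * (a : PG R)⁻¹
        = (a : PG R) * ((a : PG R)⁻¹ * b * gen R s * ((a : PG R)⁻¹ * b)⁻¹) * (a : PG R)⁻¹ := by
          rw [h]
      _ = (b : PG R) * gen R s * (b : PG R)⁻¹ := by group)

theorem cj_mk (g : G R T) :
    cj R T s (QuotientGroup.mk g) = (g : PG R) * gen R s * (g : PG R)⁻¹ := rfl

theorem cj_smul (g : G R T) (x) :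
    cj R T s (g • x) = (g : PG R) * cj R T s x * (g : PG R)⁻¹ := by
  induction x using QuotientGroup.induction_on with
  | H z =>
    change cj R T s (QuotientGroup.mk (g * z)) = _
    rw [cj_mk, cj_mk, Subgroup.coe_mul]
    group

/-- The map from the kernel to the big group. -/
def toW : K R T s →* PG R :=
  lift (cj R T s) (by
    intro x
    induction x using QuotientGroup.induction_on with
    | H z => rw [cj_mk, conj_pow, gen_sq]; simp) (by
    rintro x y j ⟨g, t, ht, h, rfl, rfl⟩
    rw [cj_mk, cj_mk]
    have h1 := sy_rel R h
    have e : (g : PG R) * gen R s * (g : PG R)⁻¹ *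
        (((g * tg R T ht : G R T) : PG R) * gen R s * ((g * tg R T ht : G R T) : PG R)⁻¹) =
        g * (gen R s * gen R t) ^ 2 * (g : PG R)⁻¹ := by
      have : ((tg R T ht : G R T) : PG R) = gen R t := rfl
      rw [Subgroup.coe_mul, this, mul_inv_rev, gen_inv, pow_two]
      group
    rw [e, conj_pow, ← pow_mul, ← pow_succ', h1]
    simp)

theorem toW_gen (x) : toW R T s (gen _ x) = cj R T s x := lift_gen _ _ _ _

/-- The map from the semidirect product. -/
def back : K R T s ⋊[actK R T s] G R T →* PG R :=
  SemidirectProduct.lift (toW R T s) (G R T).subtype (by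
    intro g
    apply hom_ext
    intro x
    simp [actK_gen, toW_gen, cj_smul])

open Classical in
/-- Images of the generators in the semidirect product. -/
noncomputable def fwdFun (b : B) : K R T s ⋊[actK R T s] G R T :=
  if b = s then SemidirectProduct.inl (gen _ (QuotientGroup.mk 1))
  else if ht : b ∈ T then SemidirectProduct.inr (tg R T ht) else 1

theorem fwdFun_s : fwdFun R T s s = SemidirectProduct.inl (gen _ (QuotientGroup.mk 1)) := by
  simp [fwdFun]

theorem fwdFun_t {t : B} (hs : t ≠ s) (ht : t ∈ T) :
    fwdFun R T s t = SemidirectProduct.inr (tg R T ht) := by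
  simp [fwdFun, hs, ht]

theorem fwdFun_o {t : B} (hs : t ≠ s) (ht : t ∉ T) : fwdFun R T s t = 1 := by
  simp [fwdFun, hs, ht]

theorem tg_sq {t : B} (ht : t ∈ T) : tg R T ht ^ 2 = 1 := Subtype.ext (gen_sq t)

theorem fwdFun_sq (b : B) : fwdFun R T s b ^ 2 = 1 := by
  by_cases hs : b = s
  · subst hs; rw [fwdFun_s, ← map_pow, gen_sq, map_one]
  · by_cases ht : b ∈ T
    · rw [fwdFun_t R T s hs ht, ← map_pow, tg_sq, map_one]
    · rw [fwdFun_o R T s hs ht, one_pow]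

theorem fwdFun_st {t : B} (hs : t ≠ s) (ht : t ∈ T) {j : ℕ} (h : Sy R s t j) :
    (fwdFun R T s s * fwdFun R T s t) ^ (2 ^ (j + 1)) = 1 := by
  have e : (fwdFun R T s s * fwdFun R T s t) ^ 2 =
      SemidirectProduct.inl (gen (Rk R T s) (QuotientGroup.mk 1) *
        gen _ (QuotientGroup.mk (1 * tg R T ht))) := by
    rw [fwdFun_s, fwdFun_t R T s hs ht, pow_two]
    have h2 := tg_sq R T ht
    rw [pow_two] at h2
    ext
    · simp [actK_gen]
    · simp [h2]
  rw [pow_succ', pow_mul, e, ← map_pow]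
  cases j with
  | zero =>
    have : (QuotientGroup.mk (1 * tg R T ht) : G R T ⧸ C R T s) = QuotientGroup.mk 1 := by
      rw [eq_comm, QuotientGroup.eq]
      simp only [inv_one, one_mul]
      exact Subgroup.subset_closure ⟨t, ht, h, rfl⟩
    rw [this, gen_mul_self]; simp
  | succ j =>
    rw [gen_rel ⟨1, t, ht, h, rfl, rfl⟩, map_one]

theorem fwdFun_rel (b c : B) (j : ℕ) (h : R b c j) :
    (fwdFun R T s b * fwdFun R T s c) ^ (2 ^ (j + 1)) = 1 := by
  by_cases hbs : b = s
  · subst hbs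
    by_cases hcs : c = b
    · subst hcs
      rw [← pow_two, fwdFun_sq, one_pow]
    · by_cases hc : c ∈ T
      · exact fwdFun_st R T b hcs hc (Or.inl h)
      · rw [fwdFun_o R T b hcs hc, mul_one, pow_succ', pow_mul, fwdFun_sq, one_pow]
  · by_cases hb : b ∈ T
    · by_cases hcs : c = s
      · subst hcs
        exact swap_pow (fwdFun_st R T c hbs hb (Or.inr h))
      · by_cases hc : c ∈ T
        · rw [fwdFun_t R T s hbs hb, fwdFun_t R T s hcs hc, ← map_mul, ← map_pow]
          have : (tg R T hb * tg R T hc) ^ (2 ^ (j + 1)) = 1 := Subtype.ext (gen_rel h)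
          rw [this, map_one]
        · rw [fwdFun_o R T s hcs hc, mul_one, pow_succ', pow_mul, fwdFun_sq, one_pow]
    · rw [fwdFun_o R T s hbs hb, one_mul, pow_succ', pow_mul, fwdFun_sq, one_pow]

/-- The map to the semidirect product. -/
noncomputable def fwd : PG R →* K R T s ⋊[actK R T s] G R T :=
  lift (fwdFun R T s) (fwdFun_sq R T s) (fwdFun_rel R T s)

theorem back_fwd (w : PG R) (hw : w ∈ Subgroup.closure (Set.image (gen R) (insert s T))) :
    back R T s (fwd R T s w) = w := by
  have hle : Subgroup.closure (Set.image (gen R) (insert s T)) ≤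
      MonoidHom.eqLocus ((back R T s).comp (fwd R T s)) (MonoidHom.id _) := by
    rw [Subgroup.closure_le]
    rintro _ ⟨b, hb, rfl⟩
    change back R T s (fwd R T s (gen R b)) = gen R b
    rw [fwd, lift_gen]
    by_cases hs : b = s
    · subst hs
      rw [fwdFun_s, back, SemidirectProduct.lift_inl, toW_gen, cj_mk]
      simp
    · have ht : b ∈ T := by simpa [hs] using hb
      rw [fwdFun_t R T s hs ht, back, SemidirectProduct.lift_inr]
      rfl
  exact hle hw

theorem noOdd_insert (hK : NoOdd (K R T s)) (hG : NoOdd (G R T)) :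
    NoOdd (G R (insert s T)) := by
  rintro ⟨w, hw⟩ n hn h
  have h : w ^ n = 1 := congrArg Subtype.val h
  have h1 : fwd R T s w = 1 := (hK.semidirect hG) _ n hn (by rw [← map_pow, h, map_one])
  have h2 := back_fwd R T s w hw
  rw [h1, map_one] at h2
  exact Subtype.ext h2.symm

end step

theorem noOdd_PG (k : ℕ) : ∀ (B : Type) (R : B → B → ℕ → Prop),
    (∀ b c j, R b c j → j < k) → NoOdd (PG R) := by
  induction k with
  | zero => exact fun B R hR => noOdd_base B R fun b c j h => absurd (hR b c j h) (by omega)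
  | succ k ih =>
    intro B R hR
    have key : ∀ T : Finset B, NoOdd (G R (T : Set B)) := by
      classical
      intro T
      induction T using Finset.induction_on with
      | empty =>
        rintro ⟨w, hw⟩ n _ _
        have : w = 1 := by simpa [G] using hw
        exact Subtype.ext this
      | insert s T _ hT =>
        rw [Finset.coe_insert]
        refine noOdd_insert R T s (ih _ _ ?_) hT
        rintro x y j ⟨g, t, ht, h, -, -⟩
        rcases h with h | h <;> have := hR _ _ _ h <;> omega
    intro w n hn hw
    obtain ⟨T, hT⟩ := exists_finset w
    exact congrArg Subtype.val (key T ⟨w, hT⟩ n hn (Subtype.ext hw))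

end EvenCox

open EvenCox in
theorem EvenCox.noOdd_coxeter {B : Type} {W : Type} [Group W]
    (M : CoxeterMatrix B) (cs : CoxeterSystem M W)
    (h : ∀ s t : B, s ≠ t → M s t = 0 ∨ ∃ k : ℕ, 1 ≤ k ∧ M s t = 2 ^ k) : NoOdd W := by
  classical
  intro w n hn hw
  have hT : ∃ T : Finset B, w ∈ Subgroup.closure (Set.image cs.simple (T : Set B)) := by
    clear hw
    induction w using cs.simple_induction with
    | one => exact ⟨∅, one_mem _⟩
    | simple b => exact ⟨{b}, Subgroup.subset_closure ⟨b, by simp, rfl⟩⟩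
    | mul x y hx hy =>
      obtain ⟨T, hT⟩ := hx
      obtain ⟨U, hU⟩ := hy
      refine ⟨T ∪ U, mul_mem (Subgroup.closure_mono ?_ hT) (Subgroup.closure_mono ?_ hU)⟩
      · exact Set.image_mono (by simp)
      · exact Set.image_mono (by simp)
  obtain ⟨T, hT⟩ := hT
  let R : B → B → ℕ → Prop := fun b c j => b ∈ T ∧ c ∈ T ∧ M b c = 2 ^ (j + 1)
  have hR : ∀ b c j, R b c j → j < (∑ b ∈ T, ∑ c ∈ T, M b c) := by
    rintro b c j ⟨hb, hc, e⟩
    have h1 : M b c ≤ ∑ c ∈ T, M b c := Finset.single_le_sum (fun _ _ => Nat.zero_le _) hc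
    have h2 : ∑ c ∈ T, M b c ≤ ∑ b ∈ T, ∑ c ∈ T, M b c :=
      Finset.single_le_sum (f := fun b => ∑ c ∈ T, M b c) (fun _ _ => Nat.zero_le _) hb
    have h3 : j + 1 < 2 ^ (j + 1) := Nat.lt_two_pow_self
    omega
  have hP := noOdd_PG _ B R hR
  let f : B → PG R := fun b => if b ∈ T then gen R b else 1
  have f_sq : ∀ b, f b ^ 2 = 1 := by
    intro b
    by_cases hb : b ∈ T <;> simp [f, hb, gen_sq]
  have hf : M.IsLiftable f := by
    intro b c
    by_cases hbc : b = c
    · subst hbc; simp [← pow_two, f_sq]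
    rcases h b c hbc with h0 | ⟨k, hk, e⟩
    · rw [h0, pow_zero]
    · obtain ⟨k, rfl⟩ : ∃ j, k = j + 1 := ⟨k - 1, by omega⟩
      rw [e]
      by_cases hb : b ∈ T
      · by_cases hc : c ∈ T
        · have := gen_rel (R := R) (b := b) (c := c) (j := k) ⟨hb, hc, e⟩
          simpa [f, hb, hc] using this
        · have : f c = 1 := by simp [f, hc]
          rw [this, mul_one, pow_succ', pow_mul, f_sq, one_pow]
      · have : f b = 1 := by simp [f, hb]
        rw [this, one_mul, pow_succ', pow_mul, f_sq, one_pow]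
  let φ : W →* PG R := cs.lift ⟨f, hf⟩
  let ψ : PG R →* W := EvenCox.lift cs.simple (fun b => by simp) (by
    rintro b c j ⟨-, -, e⟩
    rw [← e, cs.simple_mul_simple_pow])
  have hle : Subgroup.closure (Set.image cs.simple (T : Set B)) ≤
      MonoidHom.eqLocus (ψ.comp φ) (MonoidHom.id _) := by
    rw [Subgroup.closure_le]
    rintro _ ⟨b, hb, rfl⟩
    change ψ (φ (cs.simple b)) = cs.simple b
    have hb : b ∈ T := hb
    have : φ (cs.simple b) = gen R b := by
      simp only [φ, cs.lift_apply_simple]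
      simp [f, hb]
    rw [this]
    exact lift_gen _ _ _ _
  have h1 : φ w = 1 := hP _ n hn (by rw [← map_pow, hw, map_one])
  have h2 : ψ (φ w) = w := hle hT
  rw [h1, map_one] at h2
  exact h2.symm

/-- If every off-diagonal entry of the Coxeter matrix of `W` is a power of `2` or `∞`
(encoded as `0`), then every element of `W` of finite order has order a power of `2`. -/
theorem orderOf_two_pow_of_two_power_labels {B : Type} {W : Type} [Group W]
    (M : CoxeterMatrix B) (cs : CoxeterSystem M W)
    (h : ∀ s t : B, s ≠ t → M s t = 0 ∨ ∃ k : ℕ, 1 ≤ k ∧ M s t = 2 ^ k)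
    (w : W) (hw : IsOfFinOrder w) :
    ∃ k : ℕ, orderOf w = 2 ^ k := by
  obtain ⟨k, m, hm, e⟩ := Nat.exists_eq_two_pow_mul_odd hw.orderOf_pos.ne'
  refine ⟨k, Nat.dvd_antisymm ?_ ⟨m, e⟩⟩
  apply orderOf_dvd_of_pow_eq_one
  refine EvenCox.noOdd_coxeter M cs h _ m hm ?_
  rw [← pow_mul, ← e, pow_orderOf_eq_one]
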